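/- Let Ω ⊂ ℝⁿ be a nonempty bounded open set with smooth boundary, Γ₁ > 0, and u₁ a function smooth on an open neighborhood of the closure of Ω, vanishing together with all its first-order derivatives on ∂Ω, with ∫_Ω u₁² = 1 and Δ²u₁ = Γ₁u₁ on Ω. Let g be smooth on an open neighborhood of the closure of Ω, set a = ∫_Ω g u₁² and ψ = (g − a)u₁, and suppose Γ is a real number with Γ ∫_Ω ψ² ≤ ∫_Ω ψ Δ²ψ. Then (Γ − Γ₁) ∫_Ω ψ² ≤ ∫_Ω (u₁ Δg + 2 ∇g·∇u₁)² − 2 ∫_Ω |∇g|² u₁ Δu₁. -/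

import Mathlib

/-!
Write `p = g − a`, `u = u₁`, `ψ = pu` and `w = u Δp + 2 ∇p·∇u`, so that `Δψ = p Δu + w`. Expanding
`Δ²ψ = Δ(p Δu) + Δw` with the Leibniz rule gives the pointwise identity
`ψ Δ²ψ − p ψ Δ²u − w² + 2 |∇p|² u Δu = div (ψ ∇w − w ∇ψ + 2 p u Δu ∇p)` (`sum_pd_gapField`).
The field on the right vanishes on `∂Ω` because `u` and `∇u` do, so its divergence integrates to
zero; with `Δ²u = Γ₁ u` this yields the exact formula
`∫ ψ Δ²ψ = Γ₁ ∫ ψ² + ∫ w² − 2 ∫ |∇p|² u Δu` (`integral_mul_bilap_eq`), and the hypothesis on `Γ`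
finishes the proof.

The divergence theorem is needed without any regularity of `∂Ω`, which may even have positive
measure (`setIntegral_fderiv_eq_zero`). A `C¹` function vanishing on `∂Ω`, restricted to `Ω` and
extended by zero, is Lipschitz with compact support, so its a.e. derivatives integrate to zero;
and these derivatives vanish a.e. outside `Ω`, by the Lebesgue density theorem.

The functions `u₁` and `g` are smooth only near the closure of `Ω`; multiplying by a cutoff replaces
them by globally smooth functions with the same germs along the closure.
-/

open MeasureTheory Real
open scoped RealInnerProductSpace

/-- The Laplacian `Δf = div (∇f)` of `f : ℝⁿ → ℝ`, as the sum of second partial derivatives. -/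
noncomputable def lap {n : ℕ} (f : EuclideanSpace ℝ (Fin n) → ℝ) (x : EuclideanSpace ℝ (Fin n)) : ℝ :=
  ∑ i : Fin n, fderiv ℝ (fun y => fderiv ℝ f y (EuclideanSpace.single i 1)) x
    (EuclideanSpace.single i 1)

/-- The bi-Laplacian `Δ²f = Δ (Δ f)`. -/
noncomputable def bilap {n : ℕ} (f : EuclideanSpace ℝ (Fin n) → ℝ) :
    EuclideanSpace ℝ (Fin n) → ℝ :=
  lap (lap f)

/-! ### Integration by parts on a bounded open set -/

open Topology Filter Set in
/-- Lipschitz continuity survives extension by zero across a set on whose frontier `F` vanishes: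
a segment leaving `Ω` meets the frontier, where `F = 0`. -/
lemma lipschitzWith_indicator_of_frontier {n : ℕ} {Ω : Set (EuclideanSpace ℝ (Fin n))}
    {F : EuclideanSpace ℝ (Fin n) → ℝ} {C : NNReal} (hF : LipschitzWith C F)
    (h0 : ∀ x ∈ frontier Ω, F x = 0) : LipschitzWith C (Ω.indicator F) := by
  have key : ∀ x ∈ Ω, ∀ y ∉ Ω, |F x| ≤ C * dist x y := by
    intro x hx y hy
    obtain ⟨z, hz, hzf⟩ : (segment ℝ x y ∩ frontier Ω).Nonempty := by
      by_contra hne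
      rw [not_nonempty_iff_eq_empty] at hne
      have hclop := (convex_segment (𝕜 := ℝ) x y).isPreconnected.subset_or_subset isOpen_interior
        (isClosed_closure (s := Ω)).isOpen_compl
        (disjoint_compl_right.mono_left (interior_subset.trans subset_closure))
        (fun z hz => by
          by_contra hz'
          rw [mem_union, not_or, mem_compl_iff, not_not] at hz'
          exact (hne ▸ (⟨hz, hz'.2, hz'.1⟩ : z ∈ segment ℝ x y ∩ frontier Ω) : z ∈ (∅ : Set _)))
      rcases hclop with h | h
      · exact hy (interior_subset (h (right_mem_segment ℝ x y)))
      · exact h (left_mem_segment ℝ x y) (subset_closure hx)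
    have h1 := hF.dist_le_mul x z
    rw [Real.dist_eq, h0 z hzf, sub_zero] at h1
    refine h1.trans ?_
    have := dist_add_dist_of_mem_segment hz
    gcongr
    linarith [dist_nonneg (x := z) (y := y)]
  refine LipschitzWith.of_dist_le_mul fun x y => ?_
  by_cases hx : x ∈ Ω <;> by_cases hy : y ∈ Ω
  · simpa [hx, hy] using hF.dist_le_mul x y
  · simpa [hx, hy, Real.dist_eq] using key x hx y hy
  · simpa [hx, hy, Real.dist_eq, dist_comm] using key y hy x hx
  · simp only [hx, hy, not_false_eq_true, indicator_of_notMem, dist_self]; positivity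

open Topology Filter Set in
/-- The derivative of a Lipschitz function vanishes almost everywhere on a measurable set where
the function vanishes: this holds at density points of the set. -/
lemma ae_lineDeriv_eq_zero_of_eqOn_zero {n : ℕ} {s : Set (EuclideanSpace ℝ (Fin n))}
    (hs : MeasurableSet s) {H : EuclideanSpace ℝ (Fin n) → ℝ} {C : NNReal} (hH : LipschitzWith C H)
    (h0 : ∀ x ∈ s, H x = 0) (v : EuclideanSpace ℝ (Fin n)) :
    ∀ᵐ x, x ∈ s → lineDeriv ℝ H x v = 0 := by
  rcases eq_or_ne v 0 with rfl | hv
  · simp [lineDeriv_zero]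
  let t := s ∩ {x | DifferentiableAt ℝ H x}
  have ht : MeasurableSet t := hs.inter (measurableSet_of_differentiableAt ℝ H)
  -- the density-point argument is available for self-maps, hence the detour through `H • v`
  have hA : ApproximatesLinearOn (fun x => H x • v)
      (0 : EuclideanSpace ℝ (Fin n) →L[ℝ] EuclideanSpace ℝ (Fin n)) t 0 := by
    intro x hx y hy
    simp [h0 x hx.1, h0 y hy.1]
  have h1 := hA.norm_fderiv_sub_le volume ht (fun x => (fderiv ℝ H x).smulRight v)
    (fun x hx => (hx.2.hasFDerivAt.smul_const v).hasFDerivWithinAt)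
  rw [ae_restrict_iff' ht] at h1
  filter_upwards [h1, hH.ae_differentiableAt] with x hx hd hxs
  have h2 := hx ⟨hxs, hd⟩
  rw [sub_zero, nonpos_iff_eq_zero, nnnorm_eq_zero] at h2
  have h3 := congrArg (fun L => L v) h2
  rw [hd.lineDeriv_eq_fderiv]
  simpa [hv] using h3

open Topology Filter Set in
/-- Integration by parts on an arbitrary bounded open set: a `C¹` function vanishing on the
frontier has directional derivatives of zero mean. No regularity of the boundary is needed. -/
lemma setIntegral_fderiv_eq_zero {n : ℕ} {Ω : Set (EuclideanSpace ℝ (Fin n))}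
    (hΩo : IsOpen Ω) (hΩb : Bornology.IsBounded Ω) {F : EuclideanSpace ℝ (Fin n) → ℝ}
    (hF : ContDiff ℝ 1 F) (h0 : ∀ x ∈ frontier Ω, F x = 0) (v : EuclideanSpace ℝ (Fin n)) :
    ∫ x in Ω, fderiv ℝ F x v = 0 := by
  obtain ⟨r, hr, hΩr⟩ := hΩb.subset_closedBall_lt 0 0
  let χ : ContDiffBump (0 : EuclideanSpace ℝ (Fin n)) := ⟨r, r + 1, hr, by linarith⟩
  have hχ : ContDiff ℝ 1 (fun x => χ x * F x) := χ.contDiff.mul hF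
  have hχc : HasCompactSupport (fun x => χ x * F x) := χ.hasCompactSupport.mul_right
  obtain ⟨C, hC⟩ := hχ.lipschitzWith_of_hasCompactSupport hχc one_ne_zero
  let H := Ω.indicator (fun x => χ x * F x)
  have hH : LipschitzWith C H :=
    lipschitzWith_indicator_of_frontier hC fun x hx => by simp [h0 x hx]
  have hHc : HasCompactSupport H :=
    HasCompactSupport.of_support_subset_isCompact hΩb.isCompact_closure
      (support_indicator_subset.trans subset_closure)
  have hone : LipschitzWith 0 (fun _ : EuclideanSpace ℝ (Fin n) => (1 : ℝ)) :=
    LipschitzWith.const 1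
  have hint : ∫ x, lineDeriv ℝ H x v = 0 := by
    have := LipschitzWith.integral_lineDeriv_mul_eq (μ := volume) hone hH hHc (-v)
    simpa [lineDeriv] using this.symm
  have hin : ∀ x ∈ Ω, lineDeriv ℝ H x v = fderiv ℝ F x v := by
    intro x hx
    have he : H =ᶠ[𝓝 x] F := by
      filter_upwards [hΩo.mem_nhds hx] with y hy
      simp [H, hy, χ.one_of_mem_closedBall (hΩr hy)]
    rw [he.lineDeriv_eq, (hF.differentiable one_ne_zero x).lineDeriv_eq_fderiv]
  have hout := ae_lineDeriv_eq_zero_of_eqOn_zero hΩo.measurableSet.compl hH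
    (fun x hx => indicator_of_notMem hx _) v
  rw [← integral_indicator hΩo.measurableSet, ← hint]
  refine integral_congr_ae ?_
  filter_upwards [hout] with x hx
  by_cases h : x ∈ Ω
  · simp [h, hin x h]
  · simp [h, hx h]

/-! ### Reduction to globally smooth functions -/

open Topology Filter Set in
/-- A function smooth near a closed set agrees, near that set, with a globally smooth function.
Agreement on neighbourhoods makes all derivatives coincide on the closed set. -/
lemma exists_contDiff_extension {n : ℕ} {K U : Set (EuclideanSpace ℝ (Fin n))}
    (hK : IsClosed K) (hU : IsOpen U) (hKU : K ⊆ U) {f : EuclideanSpace ℝ (Fin n) → ℝ}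
    (hf : ContDiffOn ℝ (⊤ : ℕ∞) f U) :
    ∃ f' : EuclideanSpace ℝ (Fin n) → ℝ, ContDiff ℝ (⊤ : ℕ∞) f' ∧ ∀ x ∈ K, f' =ᶠ[𝓝 x] f := by
  obtain ⟨χ, h0, h1, -⟩ := exists_contMDiffMap_zero_one_nhds_of_isClosed
    (n := ⊤) (modelWithCornersSelf ℝ (EuclideanSpace ℝ (Fin n))) hU.isClosed_compl hK
    (disjoint_compl_left_iff_subset.2 hKU)
  rw [eventually_nhdsSet_iff_forall] at h0 h1
  refine ⟨fun x => χ x * f x, contDiff_iff_contDiffAt.2 fun x => ?_, fun x hx => ?_⟩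
  · by_cases hx : x ∈ U
    · exact χ.contMDiff.contDiff.contDiffAt.mul (hf.contDiffAt (hU.mem_nhds hx))
    · refine (contDiffAt_const (c := (0 : ℝ))).congr_of_eventuallyEq ?_
      filter_upwards [h0 x hx] with y hy
      simp [hy]
  · filter_upwards [h1 x hx] with y hy
    simp [hy]

open Topology Filter in
lemma Filter.EventuallyEq.lap_nhds {n : ℕ} {f h : EuclideanSpace ℝ (Fin n) → ℝ}
    {x : EuclideanSpace ℝ (Fin n)} (hfh : f =ᶠ[𝓝 x] h) : lap f =ᶠ[𝓝 x] lap h := by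
  have key : ∀ {f h : EuclideanSpace ℝ (Fin n) → ℝ} {x}, f =ᶠ[𝓝 x] h → lap f x = lap h x := by
    intro f h x hfh
    refine Finset.sum_congr rfl fun i _ => ?_
    have : (fun y => fderiv ℝ f y (EuclideanSpace.single i 1)) =ᶠ[𝓝 x]
        fun y => fderiv ℝ h y (EuclideanSpace.single i 1) := by
      filter_upwards [hfh.fderiv (𝕜 := ℝ)] with y hy
      rw [hy]
    rw [this.fderiv_eq]
  filter_upwards [hfh.eventuallyEq_nhds] with y hy using key hy

/-! ### Partial derivatives and the gap identity -/

/-- The `i`-th partial derivative. -/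
noncomputable def pd {n : ℕ} (i : Fin n) (f : EuclideanSpace ℝ (Fin n) → ℝ)
    (x : EuclideanSpace ℝ (Fin n)) : ℝ :=
  fderiv ℝ f x (EuclideanSpace.single i 1)

lemma lap_eq_sum_pd {n : ℕ} (f : EuclideanSpace ℝ (Fin n) → ℝ) (x : EuclideanSpace ℝ (Fin n)) :
    lap f x = ∑ i, pd i (pd i f) x := rfl

lemma contDiff_pd {n : ℕ} (i : Fin n) {f : EuclideanSpace ℝ (Fin n) → ℝ}
    (hf : ContDiff ℝ (⊤ : ℕ∞) f) : ContDiff ℝ (⊤ : ℕ∞) (pd i f) :=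
  (hf.fderiv_right (m := (⊤ : ℕ∞)) (by simp)).clm_apply contDiff_const

lemma contDiff_lap {n : ℕ} {f : EuclideanSpace ℝ (Fin n) → ℝ}
    (hf : ContDiff ℝ (⊤ : ℕ∞) f) : ContDiff ℝ (⊤ : ℕ∞) (lap f) :=
  ContDiff.sum fun i _ => contDiff_pd i (contDiff_pd i hf)

lemma pd_add {n : ℕ} (i : Fin n) {f h : EuclideanSpace ℝ (Fin n) → ℝ}
    (hf : ContDiff ℝ (⊤ : ℕ∞) f) (hh : ContDiff ℝ (⊤ : ℕ∞) h) :
    pd i (fun x => f x + h x) = fun x => pd i f x + pd i h x := by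
  funext x
  simp [pd, fderiv_fun_add (hf.differentiable (by simp) x) (hh.differentiable (by simp) x)]

lemma pd_sub {n : ℕ} (i : Fin n) {f h : EuclideanSpace ℝ (Fin n) → ℝ}
    (hf : ContDiff ℝ (⊤ : ℕ∞) f) (hh : ContDiff ℝ (⊤ : ℕ∞) h) :
    pd i (fun x => f x - h x) = fun x => pd i f x - pd i h x := by
  funext x
  simp [pd, fderiv_fun_sub (hf.differentiable (by simp) x) (hh.differentiable (by simp) x)]

lemma pd_mul {n : ℕ} (i : Fin n) {f h : EuclideanSpace ℝ (Fin n) → ℝ}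
    (hf : ContDiff ℝ (⊤ : ℕ∞) f) (hh : ContDiff ℝ (⊤ : ℕ∞) h) :
    pd i (fun x => f x * h x) = fun x => f x * pd i h x + pd i f x * h x := by
  funext x
  simp [pd, fderiv_fun_mul (hf.differentiable (by simp) x) (hh.differentiable (by simp) x), mul_comm]

lemma pd_sub_const {n : ℕ} (i : Fin n) (f : EuclideanSpace ℝ (Fin n) → ℝ) (a : ℝ) :
    pd i (fun x => f x - a) = pd i f := by
  funext x
  rw [pd, fderiv_sub_const, pd]

lemma lap_sub_const {n : ℕ} (f : EuclideanSpace ℝ (Fin n) → ℝ) (a : ℝ) :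
    lap (fun x => f x - a) = lap f := by
  funext x
  simp [lap_eq_sum_pd, pd_sub_const]

lemma lap_add {n : ℕ} {f h : EuclideanSpace ℝ (Fin n) → ℝ}
    (hf : ContDiff ℝ (⊤ : ℕ∞) f) (hh : ContDiff ℝ (⊤ : ℕ∞) h) :
    lap (fun x => f x + h x) = fun x => lap f x + lap h x := by
  funext x
  simp only [lap_eq_sum_pd, pd_add _ hf hh, pd_add _ (contDiff_pd _ hf) (contDiff_pd _ hh),
    Finset.sum_add_distrib]

lemma lap_mul {n : ℕ} {f h : EuclideanSpace ℝ (Fin n) → ℝ}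
    (hf : ContDiff ℝ (⊤ : ℕ∞) f) (hh : ContDiff ℝ (⊤ : ℕ∞) h) :
    lap (fun x => f x * h x) =
      fun x => f x * lap h x + (h x * lap f x + 2 * ∑ i, pd i f x * pd i h x) := by
  funext x
  simp only [lap_eq_sum_pd, pd_mul _ hf hh]
  simp only [fun i => pd_add i (hf.mul (contDiff_pd i hh)) ((contDiff_pd i hf).mul hh),
    fun i => pd_mul i hf (contDiff_pd i hh), fun i => pd_mul i (contDiff_pd i hf) hh,
    Finset.mul_sum, ← Finset.sum_add_distrib]
  exact Finset.sum_congr rfl fun i _ => by ring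

lemma inner_gradient_eq_sum {n : ℕ} (f h : EuclideanSpace ℝ (Fin n) → ℝ)
    (x : EuclideanSpace ℝ (Fin n)) :
    ⟪gradient f x, gradient h x⟫ = ∑ i, pd i f x * pd i h x := by
  rw [← (EuclideanSpace.basisFun (Fin n) ℝ).sum_inner_mul_inner]
  refine Finset.sum_congr rfl fun i _ => ?_
  rw [real_inner_comm (gradient h x)]
  simp [gradient, pd, InnerProductSpace.toDual_symm_apply]

/-- The field whose divergence is the defect in the gap identity (with `w = u Δp + 2 ∇p·∇u`):
`pu ∇w − w ∇(pu) + 2 p u Δu ∇p`. -/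
noncomputable def gapField {n : ℕ} (p u w : EuclideanSpace ℝ (Fin n) → ℝ) (i : Fin n)
    (x : EuclideanSpace ℝ (Fin n)) : ℝ :=
  (p x * u x) * pd i w x - w x * pd i (fun y => p y * u y) x
    + (2 * p x * u x * lap u x) * pd i p x

lemma contDiff_gapField {n : ℕ} {p u w : EuclideanSpace ℝ (Fin n) → ℝ}
    (hp : ContDiff ℝ (⊤ : ℕ∞) p) (hu : ContDiff ℝ (⊤ : ℕ∞) u) (hw : ContDiff ℝ (⊤ : ℕ∞) w)
    (i : Fin n) : ContDiff ℝ (⊤ : ℕ∞) (gapField p u w i) :=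
  (((hp.mul hu).mul (contDiff_pd i hw)).sub (hw.mul (contDiff_pd i (hp.mul hu)))).add
    ((((contDiff_const.mul hp).mul hu).mul (contDiff_lap hu)).mul (contDiff_pd i hp))

lemma contDiff_gapSource {n : ℕ} {p u : EuclideanSpace ℝ (Fin n) → ℝ}
    (hp : ContDiff ℝ (⊤ : ℕ∞) p) (hu : ContDiff ℝ (⊤ : ℕ∞) u) :
    ContDiff ℝ (⊤ : ℕ∞) (fun x => u x * lap p x + 2 * ∑ i, pd i p x * pd i u x) :=
  (hu.mul (contDiff_lap hp)).add
    (contDiff_const.mul (ContDiff.sum fun i _ => (contDiff_pd i hp).mul (contDiff_pd i hu)))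

/-- The pointwise identity behind the estimate: expanding `Δ²(pu)` by the Leibniz rule,
`pu Δ²(pu) − p²u Δ²u − w² + 2|∇p|² u Δu` is a divergence. -/
lemma sum_pd_gapField {n : ℕ} {p u w : EuclideanSpace ℝ (Fin n) → ℝ}
    (hp : ContDiff ℝ (⊤ : ℕ∞) p) (hu : ContDiff ℝ (⊤ : ℕ∞) u)
    (hw : w = fun x => u x * lap p x + 2 * ∑ i, pd i p x * pd i u x)
    (x : EuclideanSpace ℝ (Fin n)) :
    ∑ i, pd i (gapField p u w i) x =
      p x * u x * bilap (fun y => p y * u y) x - p x * u x * (p x * bilap u x)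
        - w x ^ 2 + 2 * ((∑ i, pd i p x * pd i p x) * u x * lap u x) := by
  have hwd : ContDiff ℝ (⊤ : ℕ∞) w := hw ▸ contDiff_gapSource hp hu
  have hL := contDiff_lap hu
  have hψ := hp.mul hu
  have hlapψ : lap (fun y => p y * u y) = fun y => p y * lap u y + w y := by
    rw [lap_mul hp hu, hw]
  have hbi : bilap (fun y => p y * u y) x = p x * bilap u x
      + (lap u x * lap p x + 2 * ∑ i, pd i p x * pd i (lap u) x) + lap w x := by
    simp only [bilap]
    rw [hlapψ, lap_add (hp.mul hL) hwd, lap_mul hp hL]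
  have hterm : ∀ i, pd i (gapField p u w i) x =
      p x * u x * pd i (pd i w) x - w x * pd i (pd i (fun y => p y * u y)) x
      + 2 * (p x * u x * lap u x) * pd i (pd i p) x
      + 2 * (u x * lap u x) * (pd i p x * pd i p x)
      + 2 * (p x * lap u x) * (pd i p x * pd i u x)
      + 2 * (p x * u x) * (pd i p x * pd i (lap u) x) := by
    intro i
    have h2 : ContDiff ℝ (⊤ : ℕ∞) (fun x => 2 * p x) := contDiff_const.mul hp
    have hc : pd i (fun _ : EuclideanSpace ℝ (Fin n) => (2 : ℝ)) = fun _ => 0 := by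
      funext y; simp [pd]
    unfold gapField
    rw [pd_add i ((hψ.mul (contDiff_pd i hwd)).sub (hwd.mul (contDiff_pd i hψ)))
        (((h2.mul hu).mul hL).mul (contDiff_pd i hp)),
      pd_sub i (hψ.mul (contDiff_pd i hwd)) (hwd.mul (contDiff_pd i hψ)),
      pd_mul i hψ (contDiff_pd i hwd), pd_mul i hwd (contDiff_pd i hψ),
      pd_mul i ((h2.mul hu).mul hL) (contDiff_pd i hp), pd_mul i (h2.mul hu) hL,
      pd_mul i h2 hu, pd_mul i contDiff_const hp, hc]
    ring
  simp only [hterm, Finset.sum_add_distrib, Finset.sum_sub_distrib, ← Finset.mul_sum,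
    ← lap_eq_sum_pd]
  rw [hbi, hlapψ]
  have hwx : w x = u x * lap p x + 2 * ∑ i, pd i p x * pd i u x := by rw [hw]
  linear_combination (-(p x * lap u x)) * hwx

lemma integrableOn_of_contDiff {n : ℕ} {Ω : Set (EuclideanSpace ℝ (Fin n))}
    (hΩb : Bornology.IsBounded Ω) {f : EuclideanSpace ℝ (Fin n) → ℝ}
    (hf : ContDiff ℝ (⊤ : ℕ∞) f) : IntegrableOn f Ω :=
  (hf.continuous.continuousOn.integrableOn_compact hΩb.isCompact_closure).mono_set subset_closure

/-- For globally smooth data the gap estimate is an identity. Here `p` plays the role of `g − a`;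
the integral of the divergence of `gapField` vanishes because `u` and `∇u` vanish on the
frontier. -/
lemma integral_mul_bilap_eq {n : ℕ} {Ω : Set (EuclideanSpace ℝ (Fin n))}
    (hΩo : IsOpen Ω) (hΩb : Bornology.IsBounded Ω) {Γ₁ : ℝ}
    {p u w : EuclideanSpace ℝ (Fin n) → ℝ}
    (hp : ContDiff ℝ (⊤ : ℕ∞) p) (hu : ContDiff ℝ (⊤ : ℕ∞) u)
    (hw : w = fun x => u x * lap p x + 2 * ∑ i, pd i p x * pd i u x)
    (hbc : ∀ x ∈ frontier Ω, u x = 0 ∧ fderiv ℝ u x = 0)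
    (heigen : ∀ x ∈ Ω, bilap u x = Γ₁ * u x) :
    ∫ x in Ω, p x * u x * bilap (fun y => p y * u y) x =
      Γ₁ * (∫ x in Ω, (p x * u x) ^ 2) + (∫ x in Ω, w x ^ 2)
        - 2 * ∫ x in Ω, (∑ i, pd i p x * pd i p x) * u x * lap u x := by
  have hwd : ContDiff ℝ (⊤ : ℕ∞) w := hw ▸ contDiff_gapSource hp hu
  have hψ := hp.mul hu
  have hdiv : ∫ x in Ω, ∑ i, pd i (gapField p u w i) x = 0 := by
    rw [integral_finsetSum _ fun i _ =>
      integrableOn_of_contDiff hΩb (contDiff_pd i (contDiff_gapField hp hu hwd i))]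
    refine Finset.sum_eq_zero fun i _ => ?_
    refine setIntegral_fderiv_eq_zero hΩo hΩb
      ((contDiff_gapField hp hu hwd i).of_le (by simp)) (fun x hx => ?_) _
    obtain ⟨h0, h1⟩ := hbc x hx
    have h2 : pd i u x = 0 := by simp [pd, h1]
    simp [gapField, pd_mul i hp hu, h0, h2]
  have i1 : IntegrableOn (fun x => p x * u x * bilap (fun y => p y * u y) x) Ω :=
    integrableOn_of_contDiff hΩb (hψ.mul (contDiff_lap (contDiff_lap hψ)))
  have i2 : IntegrableOn (fun x => Γ₁ * (p x * u x) ^ 2) Ω :=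
    integrableOn_of_contDiff hΩb (contDiff_const.mul (hψ.pow 2))
  have i3 : IntegrableOn (fun x => w x ^ 2) Ω := integrableOn_of_contDiff hΩb (hwd.pow 2)
  have i4 : IntegrableOn (fun x => 2 * ((∑ i, pd i p x * pd i p x) * u x * lap u x)) Ω :=
    integrableOn_of_contDiff hΩb (contDiff_const.mul
      (((ContDiff.sum fun i _ => (contDiff_pd i hp).mul (contDiff_pd i hp)).mul hu).mul
        (contDiff_lap hu)))
  have hpt : ∫ x in Ω, ∑ i, pd i (gapField p u w i) x =
      ∫ x in Ω, (p x * u x * bilap (fun y => p y * u y) x - Γ₁ * (p x * u x) ^ 2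
        - w x ^ 2 + 2 * ((∑ i, pd i p x * pd i p x) * u x * lap u x)) := by
    refine setIntegral_congr_fun hΩo.measurableSet fun x hx => ?_
    simp only [sum_pd_gapField hp hu hw x, heigen x hx]
    ring
  have i12 : IntegrableOn (fun x => p x * u x * bilap (fun y => p y * u y) x
      - Γ₁ * (p x * u x) ^ 2) Ω := i1.sub i2
  have i123 : IntegrableOn (fun x => p x * u x * bilap (fun y => p y * u y) x
      - Γ₁ * (p x * u x) ^ 2 - w x ^ 2) Ω := i12.sub i3
  rw [hdiv, integral_add i123 i4, integral_sub i12 i3, integral_sub i1 i2,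
    integral_const_mul, integral_const_mul] at hpt
  linarith

/-- Inequality (3.9) of the paper: the key gap estimate for the trial function
`ψ = (g − a)u₁` on a Euclidean domain. -/
theorem clamped_plate_gap_estimate
    {n : ℕ} (hn : 1 ≤ n) (Ω : Set (EuclideanSpace ℝ (Fin n)))
    (hΩo : IsOpen Ω) (hΩb : Bornology.IsBounded Ω) (hΩne : Ω.Nonempty)
    (Γ₁ : ℝ) (hΓ₁ : 0 < Γ₁)
    (u₁ g : EuclideanSpace ℝ (Fin n) → ℝ)
    (hu₁smooth : ∃ U : Set (EuclideanSpace ℝ (Fin n)),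
      IsOpen U ∧ closure Ω ⊆ U ∧ ContDiffOn ℝ (⊤ : ℕ∞) u₁ U)
    (hbc : ∀ x ∈ frontier Ω, u₁ x = 0 ∧ fderiv ℝ u₁ x = 0)
    (hnorm : ∫ x in Ω, (u₁ x) ^ 2 = 1)
    (heigen : ∀ x ∈ Ω, bilap u₁ x = Γ₁ * u₁ x)
    (hgsmooth : ∃ U : Set (EuclideanSpace ℝ (Fin n)),
      IsOpen U ∧ closure Ω ⊆ U ∧ ContDiffOn ℝ (⊤ : ℕ∞) g U)
    (a : ℝ) (ha : a = ∫ x in Ω, g x * (u₁ x) ^ 2)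
    (ψ : EuclideanSpace ℝ (Fin n) → ℝ) (hψ : ψ = fun x => (g x - a) * u₁ x)
    (Γ : ℝ)
    (hRR : Γ * ∫ x in Ω, (ψ x) ^ 2 ≤ ∫ x in Ω, ψ x * bilap ψ x) :
    (Γ - Γ₁) * ∫ x in Ω, (ψ x) ^ 2 ≤
      (∫ x in Ω, (u₁ x * lap g x + 2 * ⟪gradient g x, gradient u₁ x⟫) ^ 2)
        - 2 * ∫ x in Ω, ‖gradient g x‖ ^ 2 * u₁ x * lap u₁ x := by
  obtain ⟨U, hUo, hΩU, hUu⟩ := hu₁smooth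
  obtain ⟨V, hVo, hΩV, hVg⟩ := hgsmooth
  obtain ⟨u, hu, huu⟩ := exists_contDiff_extension isClosed_closure hUo hΩU hUu
  obtain ⟨g', hg', hgg⟩ := exists_contDiff_extension isClosed_closure hVo hΩV hVg
  have hbc' : ∀ x ∈ frontier Ω, u x = 0 ∧ fderiv ℝ u x = 0 := fun x hx => by
    have h := huu x (frontier_subset_closure hx)
    rw [h.eq_of_nhds, h.fderiv_eq]
    exact hbc x hx
  have heigen' : ∀ x ∈ Ω, bilap u x = Γ₁ * u x := fun x hx => by
    have h := huu x (subset_closure hx)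
    rw [h.eq_of_nhds, bilap, h.lap_nhds.lap_nhds.eq_of_nhds]
    exact heigen x hx
  have main := integral_mul_bilap_eq hΩo hΩb (hg'.sub (contDiff_const (c := a))) hu rfl hbc' heigen'
  simp only [pd_sub_const, lap_sub_const] at main
  have e1 : ∫ x in Ω, ψ x * bilap ψ x =
      ∫ x in Ω, (g' x - a) * u x * bilap (fun y => (g' y - a) * u y) x := by
    refine setIntegral_congr_fun hΩo.measurableSet fun x hx => ?_
    have h : ψ =ᶠ[nhds x] fun y => (g' y - a) * u y := by
      filter_upwards [huu x (subset_closure hx), hgg x (subset_closure hx)] with y h1 h2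
      rw [hψ, h1, h2]
    simp only [bilap, h.lap_nhds.lap_nhds.eq_of_nhds, h.eq_of_nhds]
  have e2 : ∫ x in Ω, (ψ x) ^ 2 = ∫ x in Ω, ((g' x - a) * u x) ^ 2 := by
    refine setIntegral_congr_fun hΩo.measurableSet fun x hx => ?_
    simp only [hψ, (huu x (subset_closure hx)).eq_of_nhds, (hgg x (subset_closure hx)).eq_of_nhds]
  have e3 : ∫ x in Ω, (u₁ x * lap g x + 2 * ⟪gradient g x, gradient u₁ x⟫) ^ 2 =
      ∫ x in Ω, (u x * lap g' x + 2 * ∑ i, pd i g' x * pd i u x) ^ 2 := by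
    refine setIntegral_congr_fun hΩo.measurableSet fun x hx => ?_
    have h1 := huu x (subset_closure hx)
    have h2 := hgg x (subset_closure hx)
    simp only [inner_gradient_eq_sum, pd, h1.eq_of_nhds, h1.fderiv_eq, h2.fderiv_eq,
      h2.lap_nhds.eq_of_nhds]
  have e4 : ∫ x in Ω, ‖gradient g x‖ ^ 2 * u₁ x * lap u₁ x =
      ∫ x in Ω, (∑ i, pd i g' x * pd i g' x) * u x * lap u x := by
    refine setIntegral_congr_fun hΩo.measurableSet fun x hx => ?_
    have h1 := huu x (subset_closure hx)
    have h2 := hgg x (subset_closure hx)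
    simp only [← real_inner_self_eq_norm_sq, inner_gradient_eq_sum, pd, h1.eq_of_nhds,
      h1.lap_nhds.eq_of_nhds, h2.fderiv_eq]
  rw [e1, main, e2] at hRR
  rw [e2, e3, e4]
  linarith
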